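/- arXiv:2210.13789 — 2 statements merged into one kernel-verified Lean document; each statement's English description precedes it below -/
import Mathlib

section
/- Let K₁ and K₂ be compact Hausdorff topological spaces and let f₁, f₂ ∈ C(K₁, ℂ) and g₁, g₂ ∈ C(K₂, ℂ) be continuous complex-valued functions (with supremum norm). If f₁ ⊥_BJ f₂ in C(K₁, ℂ), then the function F₁ : K₁ × K₂ → ℂ, F₁(s,t) = f₁(s)·g₁(t), is Birkhoff-James orthogonal in C(K₁ × K₂, ℂ) to F₂(s,t) = f₂(s)·g₂(t); that is, ‖F₁ + α F₂‖_∞ ≥ ‖F₁‖_∞ for every α ∈ ℂ. -/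
/-!
Fixing the second variable at `t` turns `f₁ ⊗ g₁` and `f₂ ⊗ g₂` into the multiples `g₁ t • f₁` and
`g₂ t • f₂`, and Birkhoff-James orthogonality survives independent rescaling of its two arguments.
Since these slices exhaust the product, slicewise orthogonality gives orthogonality in sup norm.
-/

/-- Birkhoff-James orthogonality `x ⊥_BJ y`, with `𝕜` the field of scalars over which the
perturbations `x + α • y` range. -/
def IsBirkhoffJamesOrthogonal (𝕜 : Type*) {E : Type*} [Norm E] [Add E] [SMul 𝕜 E] (x y : E) :
    Prop :=
  ∀ α : 𝕜, ‖x‖ ≤ ‖x + α • y‖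

namespace IsBirkhoffJamesOrthogonal

variable {𝕜 E : Type*} [NormedField 𝕜] [SeminormedAddCommGroup E] [NormedSpace 𝕜 E]

theorem smul_smul {x y : E} (h : IsBirkhoffJamesOrthogonal 𝕜 x y) (c d : 𝕜) :
    IsBirkhoffJamesOrthogonal 𝕜 (c • x) (d • y) := by
  intro α
  rcases eq_or_ne c 0 with rfl | hc
  · simp
  have factor : c • x + α • d • y = c • (x + (c⁻¹ * (α * d)) • y) := by
    rw [smul_add, ← mul_smul c, mul_inv_cancel_left₀ hc, mul_smul]
  rw [factor, norm_smul, norm_smul]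
  gcongr
  exact h _

theorem of_comp_jointly_surjective {ι X Y : Type*} [TopologicalSpace X] [CompactSpace X]
    [TopologicalSpace Y] [CompactSpace Y] {F G : C(Y, E)} (φ : ι → C(X, Y))
    (hφ : ∀ y, ∃ i x, φ i x = y)
    (h : ∀ i, IsBirkhoffJamesOrthogonal 𝕜 (F.comp (φ i)) (G.comp (φ i))) :
    IsBirkhoffJamesOrthogonal 𝕜 F G := by
  intro α
  refine (ContinuousMap.norm_le _ (norm_nonneg _)).2 fun y ↦ ?_
  obtain ⟨i, x, rfl⟩ := hφ y
  calc
    ‖F (φ i x)‖ ≤ ‖F.comp (φ i)‖ := (F.comp (φ i)).norm_coe_le_norm x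
    _ ≤ ‖F.comp (φ i) + α • G.comp (φ i)‖ := h i α
    _ ≤ ‖F + α • G‖ :=
      (ContinuousMap.norm_le _ (norm_nonneg _)).2 fun x' ↦
        (F + α • G).norm_coe_le_norm (φ i x')

end IsBirkhoffJamesOrthogonal

theorem stmt1_general {𝕜 E K₁ K₂ : Type*} [NormedField 𝕜] [SeminormedAddCommGroup E]
    [NormedSpace 𝕜 E] [TopologicalSpace K₁] [CompactSpace K₁] [TopologicalSpace K₂]
    [CompactSpace K₂] {f₁ f₂ : C(K₁, E)} (hf : IsBirkhoffJamesOrthogonal 𝕜 f₁ f₂)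
    (g₁ g₂ : C(K₂, 𝕜)) :
    IsBirkhoffJamesOrthogonal 𝕜
      (g₁.comp (.snd : C(K₁ × K₂, K₂)) • f₁.comp (.fst : C(K₁ × K₂, K₁)))
      (g₂.comp (.snd : C(K₁ × K₂, K₂)) • f₂.comp (.fst : C(K₁ × K₂, K₁))) :=
  .of_comp_jointly_surjective (fun t ↦ (ContinuousMap.id K₁).prodMk (.const K₁ t))
    (fun (s, t) ↦ ⟨t, s, rfl⟩) (fun t ↦ hf.smul_smul (g₁ t) (g₂ t))

/-- For compact Hausdorff spaces `K₁, K₂` and complex-valued continuous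
functions `f₁, f₂` on `K₁` and `g₁, g₂` on `K₂`, if `f₁ ⊥_BJ f₂` in `C(K₁, ℂ)`, then the
function `(s,t) ↦ f₁ s * g₁ t` is Birkhoff-James orthogonal to `(s,t) ↦ f₂ s * g₂ t` in
`C(K₁ × K₂, ℂ)`. -/
theorem stmt1
    {K₁ K₂ : Type*} [TopologicalSpace K₁] [CompactSpace K₁] [T2Space K₁]
    [TopologicalSpace K₂] [CompactSpace K₂] [T2Space K₂]
    (f₁ f₂ : C(K₁, ℂ)) (g₁ g₂ : C(K₂, ℂ))
    (hBJ : ∀ α : ℂ, ‖f₁ + α • f₂‖ ≥ ‖f₁‖) :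
    ∀ α : ℂ,
      ‖(f₁.comp ContinuousMap.fst * g₁.comp ContinuousMap.snd) +
          α • (f₂.comp ContinuousMap.fst * g₂.comp ContinuousMap.snd)‖ ≥
        ‖f₁.comp ContinuousMap.fst * g₁.comp ContinuousMap.snd‖ := by
  intro α
  simpa only [smul_eq_mul, mul_comm] using stmt1_general hBJ g₁ g₂ α
end

section
/- Let X and Y be real Banach spaces and let x₁, x₂ ∈ X, y₁, y₂ ∈ Y. For μ ∈ ℝ, let S(μ) = sup{ |φ(x₁)ψ(y₁) + μ·φ(x₂)ψ(y₂)| : φ ∈ X*, ψ ∈ Y*, ‖φ‖ ≤ 1, ‖ψ‖ ≤ 1 } (this is the injective tensor norm of (x₁ ⊗ y₁) + μ(x₂ ⊗ y₂)). Then S(μ) ≥ ‖x₁‖·‖y₁‖ for all μ ∈ ℝ if and only if x₁ ⊥_BJ x₂ in X or y₁ ⊥_BJ y₂ in Y. In other words, x₁ ⊗ y₁ ⊥_BJ x₂ ⊗ y₂ in the injective tensor product X ⊗^λ Y if and only if x₁ ⊥_BJ x₂ or y₁ ⊥_BJ y₂. -/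
/-!
If `x₁ ⊥ x₂`, contract the tensor `x₁ ⊗ y₁ + μ x₂ ⊗ y₂` with a functional norming `y₁`: the result
is `‖y₁‖ x₁ + β x₂` for some scalar `β`, whose norm is at least `‖x₁‖ ‖y₁‖` by orthogonality.

Conversely, if neither orthogonality holds, take `u = x₁ + α x₂` and `v = y₁ + β y₂` with
`‖u‖ < ‖x₁‖` and `‖v‖ < ‖y₁‖`, and set `μ = -α β / 2`. Then twice the tensor is the CHSH combination
`x₁ ⊗ (y₁ + v) + u ⊗ (y₁ - v)`, and since `|c + q| + |c - q| = 2 max |c| |q|` for real `c`, `q`, the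
tensor has norm at most `‖x₁‖ ‖y₁‖ - (‖x₁‖ - ‖u‖) (‖y₁‖ - ‖v‖) / 2`.
-/

open TensorProduct

section RealInequalities

variable {a p c q A P C Q : ℝ}

theorem abs_add_add_abs_sub_le (hc : |c| ≤ C) (hq : |q| ≤ C) : |c + q| + |c - q| ≤ 2 * C := by
  rw [abs_le] at hc hq
  rcases abs_cases (c + q) with ⟨hadd, _⟩ | ⟨hadd, _⟩ <;>
    rcases abs_cases (c - q) with ⟨hsub, _⟩ | ⟨hsub, _⟩ <;> linarith

theorem abs_mul_add_add_mul_sub_le (ha : |a| ≤ A) (hp : |p| ≤ P) (hc : |c| ≤ C) (hq : |q| ≤ Q)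
    (hPA : P ≤ A) (hQC : Q ≤ C) :
    |a * (c + q) + p * (c - q)| ≤ A * (C + Q) + P * (C - Q) := by
  have hP : 0 ≤ P := (abs_nonneg p).trans hp
  have sum_le : |c + q| ≤ C + Q := (abs_add_le c q).trans (add_le_add hc hq)
  have sum_add_diff_le : |c + q| + |c - q| ≤ 2 * C := abs_add_add_abs_sub_le hc (hq.trans hQC)
  calc |a * (c + q) + p * (c - q)|
      ≤ |a * (c + q)| + |p * (c - q)| := abs_add_le _ _
    _ = |a| * |c + q| + |p| * |c - q| := by rw [abs_mul, abs_mul]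
    _ ≤ A * |c + q| + P * |c - q| := by gcongr
    _ = (A - P) * |c + q| + P * (|c + q| + |c - q|) := by ring
    _ ≤ (A - P) * (C + Q) + P * (2 * C) :=
        add_le_add (mul_le_mul_of_nonneg_left sum_le (sub_nonneg.2 hPA))
          (mul_le_mul_of_nonneg_left sum_add_diff_le hP)
    _ = A * (C + Q) + P * (C - Q) := by ring

theorem abs_mul_sub_half_mul_sub_le (ha : |a| ≤ A) (hp : |p| ≤ P) (hc : |c| ≤ C) (hq : |q| ≤ Q)
    (hPA : P ≤ A) (hQC : Q ≤ C) :
    |a * c - 1 / 2 * ((a - p) * (c - q))| ≤ A * C - 1 / 2 * ((A - P) * (C - Q)) := by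
  calc |a * c - 1 / 2 * ((a - p) * (c - q))|
      = |1 / 2 * (a * (c + q) + p * (c - q))| := by ring_nf
    _ = 1 / 2 * |a * (c + q) + p * (c - q)| := by rw [abs_mul, abs_of_pos one_half_pos]
    _ ≤ 1 / 2 * (A * (C + Q) + P * (C - Q)) := by
        gcongr
        exact abs_mul_add_add_mul_sub_le ha hp hc hq hPA hQC
    _ = A * C - 1 / 2 * ((A - P) * (C - Q)) := by ring

end RealInequalities

section Orthogonality

variable {E : Type*} [SeminormedAddCommGroup E] [NormedSpace ℝ E]

/-- Birkhoff-James orthogonality `x ⊥_BJ y` in a real seminormed space. The relation is not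
symmetric in general. -/
def BirkhoffJamesOrthogonal (x y : E) : Prop :=
  ∀ α : ℝ, ‖x‖ ≤ ‖x + α • y‖

theorem BirkhoffJamesOrthogonal.smul_left {x y : E} (hxy : BirkhoffJamesOrthogonal x y) (r : ℝ) :
    BirkhoffJamesOrthogonal (r • x) y := by
  intro α
  obtain rfl | hr := eq_or_ne r 0
  · simp
  calc ‖r • x‖ = ‖r‖ * ‖x‖ := norm_smul r x
    _ ≤ ‖r‖ * ‖x + (α / r) • y‖ := by
        gcongr
        exact hxy (α / r)
    _ = ‖r • x + α • y‖ := by rw [← norm_smul, smul_add, smul_smul, mul_div_cancel₀ α hr]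

end Orthogonality

theorem apply_rid_lTensor {R M N : Type*} [CommSemiring R] [AddCommMonoid M] [AddCommMonoid N]
    [Module R M] [Module R N] (f : Module.Dual R M) (g : Module.Dual R N) (w : M ⊗[R] N) :
    f (TensorProduct.rid R M (g.lTensor M w)) = dualDistrib R M N (f ⊗ₜ g) w := by
  induction w with
  | zero => simp
  | tmul x y => simp [mul_comm]
  | add w₁ w₂ ih₁ ih₂ => simp [ih₁, ih₂]

section InjectiveNorm

variable {X Y : Type*} [SeminormedAddCommGroup X] [NormedSpace ℝ X]
  [SeminormedAddCommGroup Y] [NormedSpace ℝ Y]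

theorem abs_apply_le_norm {φ : StrongDual ℝ X} (hφ : ‖φ‖ ≤ 1) (x : X) : |φ x| ≤ ‖x‖ := by
  simpa using φ.le_of_opNorm_le hφ x

/-- The injective norm of a tensor in the algebraic tensor product: the supremum of the absolute
values of `φ ⊗ ψ` at the tensor, over `φ` and `ψ` in the dual unit balls. -/
noncomputable def injectiveNorm (w : X ⊗[ℝ] Y) : ℝ :=
  sSup {t : ℝ | ∃ (φ : StrongDual ℝ X) (ψ : StrongDual ℝ Y), ‖φ‖ ≤ 1 ∧ ‖ψ‖ ≤ 1 ∧
    t = |dualDistrib ℝ X Y (φ.toLinearMap ⊗ₜ ψ.toLinearMap) w|}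

theorem injectiveNorm_tmul_add_smul_tmul (x₁ x₂ : X) (y₁ y₂ : Y) (μ : ℝ) :
    injectiveNorm (x₁ ⊗ₜ[ℝ] y₁ + μ • x₂ ⊗ₜ[ℝ] y₂) =
      sSup {t : ℝ | ∃ (φ : X →L[ℝ] ℝ) (ψ : Y →L[ℝ] ℝ), ‖φ‖ ≤ 1 ∧ ‖ψ‖ ≤ 1 ∧
        t = |φ x₁ * ψ y₁ + μ * (φ x₂ * ψ y₂)|} := by
  simp [injectiveNorm]

theorem injectiveNorm_le {w : X ⊗[ℝ] Y} {M : ℝ}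
    (hM : ∀ (φ : StrongDual ℝ X) (ψ : StrongDual ℝ Y), ‖φ‖ ≤ 1 → ‖ψ‖ ≤ 1 →
      |dualDistrib ℝ X Y (φ.toLinearMap ⊗ₜ ψ.toLinearMap) w| ≤ M) :
    injectiveNorm w ≤ M := by
  refine csSup_le ⟨_, 0, 0, by simp, by simp, rfl⟩ ?_
  rintro _ ⟨φ, ψ, hφ, hψ, rfl⟩
  exact hM φ ψ hφ hψ

theorem exists_forall_abs_dualDistrib_le (w : X ⊗[ℝ] Y) :
    ∃ M : ℝ, ∀ (φ : StrongDual ℝ X) (ψ : StrongDual ℝ Y), ‖φ‖ ≤ 1 → ‖ψ‖ ≤ 1 →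
      |dualDistrib ℝ X Y (φ.toLinearMap ⊗ₜ ψ.toLinearMap) w| ≤ M := by
  induction w with
  | zero => exact ⟨0, by simp⟩
  | tmul x y =>
    refine ⟨‖x‖ * ‖y‖, fun φ ψ hφ hψ ↦ ?_⟩
    rw [dualDistrib_apply, abs_mul]
    exact mul_le_mul (abs_apply_le_norm hφ x) (abs_apply_le_norm hψ y) (abs_nonneg _)
      (norm_nonneg _)
  | add w₁ w₂ ih₁ ih₂ =>
    obtain ⟨M₁, hM₁⟩ := ih₁
    obtain ⟨M₂, hM₂⟩ := ih₂
    refine ⟨M₁ + M₂, fun φ ψ hφ hψ ↦ ?_⟩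
    rw [map_add]
    exact (abs_add_le _ _).trans (add_le_add (hM₁ φ ψ hφ hψ) (hM₂ φ ψ hφ hψ))

theorem abs_dualDistrib_le_injectiveNorm {φ : StrongDual ℝ X} {ψ : StrongDual ℝ Y}
    (hφ : ‖φ‖ ≤ 1) (hψ : ‖ψ‖ ≤ 1) (w : X ⊗[ℝ] Y) :
    |dualDistrib ℝ X Y (φ.toLinearMap ⊗ₜ ψ.toLinearMap) w| ≤ injectiveNorm w := by
  obtain ⟨M, hM⟩ := exists_forall_abs_dualDistrib_le w
  refine le_csSup ⟨M, ?_⟩ ⟨φ, ψ, hφ, hψ, rfl⟩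
  rintro _ ⟨φ', ψ', hφ', hψ', rfl⟩
  exact hM φ' ψ' hφ' hψ'

theorem injectiveNorm_comm_le (w : X ⊗[ℝ] Y) :
    injectiveNorm (TensorProduct.comm ℝ X Y w) ≤ injectiveNorm w := by
  refine injectiveNorm_le fun ψ φ hψ hφ ↦ ?_
  rw [dualDistrib_apply_comm, comm_tmul]
  exact abs_dualDistrib_le_injectiveNorm hφ hψ w

theorem norm_rid_lTensor_le_injectiveNorm {ψ : StrongDual ℝ Y} (hψ : ‖ψ‖ ≤ 1) (w : X ⊗[ℝ] Y) :
    ‖TensorProduct.rid ℝ X (ψ.toLinearMap.lTensor X w)‖ ≤ injectiveNorm w := by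
  obtain ⟨φ, hφ, hφ_norm⟩ :=
    exists_dual_vector'' ℝ (TensorProduct.rid ℝ X (ψ.toLinearMap.lTensor X w))
  calc ‖TensorProduct.rid ℝ X (ψ.toLinearMap.lTensor X w)‖
      = φ (TensorProduct.rid ℝ X (ψ.toLinearMap.lTensor X w)) := hφ_norm.symm
    _ = dualDistrib ℝ X Y (φ.toLinearMap ⊗ₜ ψ.toLinearMap) w :=
        apply_rid_lTensor φ.toLinearMap ψ.toLinearMap w
    _ ≤ injectiveNorm w :=
        (le_abs_self _).trans (abs_dualDistrib_le_injectiveNorm hφ hψ w)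

theorem injectiveNorm_tmul_sub_half_smul_tmul_le {x u : X} {y v : Y}
    (hux : ‖u‖ ≤ ‖x‖) (hvy : ‖v‖ ≤ ‖y‖) :
    injectiveNorm (x ⊗ₜ[ℝ] y - (1 / 2 : ℝ) • (x - u) ⊗ₜ[ℝ] (y - v)) ≤
      ‖x‖ * ‖y‖ - 1 / 2 * ((‖x‖ - ‖u‖) * (‖y‖ - ‖v‖)) := by
  refine injectiveNorm_le fun φ ψ hφ hψ ↦ ?_
  simpa only [map_sub, map_smul, dualDistrib_apply, ContinuousLinearMap.coe_coe, smul_eq_mul] using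
    abs_mul_sub_half_mul_sub_le (abs_apply_le_norm hφ x) (abs_apply_le_norm hφ u)
      (abs_apply_le_norm hψ y) (abs_apply_le_norm hψ v) hux hvy

theorem BirkhoffJamesOrthogonal.norm_mul_norm_le_injectiveNorm_left {x₁ x₂ : X}
    (hx : BirkhoffJamesOrthogonal x₁ x₂) (y₁ y₂ : Y) (μ : ℝ) :
    ‖x₁‖ * ‖y₁‖ ≤ injectiveNorm (x₁ ⊗ₜ[ℝ] y₁ + μ • x₂ ⊗ₜ[ℝ] y₂) := by
  obtain ⟨ψ, hψ, hψ_norm⟩ := exists_dual_vector'' ℝ y₁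
  calc ‖x₁‖ * ‖y₁‖ = ‖‖y₁‖ • x₁‖ := by rw [norm_smul, norm_norm, mul_comm]
    _ ≤ ‖‖y₁‖ • x₁ + (μ * ψ y₂) • x₂‖ := hx.smul_left ‖y₁‖ (μ * ψ y₂)
    _ = ‖TensorProduct.rid ℝ X
          (ψ.toLinearMap.lTensor X (x₁ ⊗ₜ[ℝ] y₁ + μ • x₂ ⊗ₜ[ℝ] y₂))‖ := by
        simp [hψ_norm, mul_smul]
    _ ≤ injectiveNorm (x₁ ⊗ₜ[ℝ] y₁ + μ • x₂ ⊗ₜ[ℝ] y₂) :=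
        norm_rid_lTensor_le_injectiveNorm hψ _

theorem BirkhoffJamesOrthogonal.norm_mul_norm_le_injectiveNorm_right {y₁ y₂ : Y}
    (hy : BirkhoffJamesOrthogonal y₁ y₂) (x₁ x₂ : X) (μ : ℝ) :
    ‖x₁‖ * ‖y₁‖ ≤ injectiveNorm (x₁ ⊗ₜ[ℝ] y₁ + μ • x₂ ⊗ₜ[ℝ] y₂) := by
  calc ‖x₁‖ * ‖y₁‖ = ‖y₁‖ * ‖x₁‖ := mul_comm _ _
    _ ≤ injectiveNorm (y₁ ⊗ₜ[ℝ] x₁ + μ • y₂ ⊗ₜ[ℝ] x₂) :=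
        hy.norm_mul_norm_le_injectiveNorm_left x₁ x₂ μ
    _ = injectiveNorm (TensorProduct.comm ℝ X Y (x₁ ⊗ₜ[ℝ] y₁ + μ • x₂ ⊗ₜ[ℝ] y₂)) := by simp
    _ ≤ injectiveNorm (x₁ ⊗ₜ[ℝ] y₁ + μ • x₂ ⊗ₜ[ℝ] y₂) := injectiveNorm_comm_le _

theorem exists_injectiveNorm_lt_norm_mul_norm {x₁ x₂ : X} {y₁ y₂ : Y}
    (hx : ¬BirkhoffJamesOrthogonal x₁ x₂) (hy : ¬BirkhoffJamesOrthogonal y₁ y₂) :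
    ∃ μ : ℝ, injectiveNorm (x₁ ⊗ₜ[ℝ] y₁ + μ • x₂ ⊗ₜ[ℝ] y₂) < ‖x₁‖ * ‖y₁‖ := by
  simp only [BirkhoffJamesOrthogonal, not_forall, not_le] at hx hy
  obtain ⟨α, hα⟩ := hx
  obtain ⟨β, hβ⟩ := hy
  refine ⟨-(1 / 2 * (α * β)), ?_⟩
  have norm_gap : 0 < (‖x₁‖ - ‖x₁ + α • x₂‖) * (‖y₁‖ - ‖y₁ + β • y₂‖) :=
    mul_pos (sub_pos.2 hα) (sub_pos.2 hβ)
  have tensor_eq : x₁ ⊗ₜ[ℝ] y₁ + (-(1 / 2 * (α * β))) • x₂ ⊗ₜ[ℝ] y₂ = x₁ ⊗ₜ[ℝ] y₁ -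
      (1 / 2 : ℝ) • (x₁ - (x₁ + α • x₂)) ⊗ₜ[ℝ] (y₁ - (y₁ + β • y₂)) := by
    simp only [sub_add_cancel_left, neg_tmul, tmul_neg, ← smul_tmul', tmul_smul]
    module
  calc injectiveNorm (x₁ ⊗ₜ[ℝ] y₁ + (-(1 / 2 * (α * β))) • x₂ ⊗ₜ[ℝ] y₂)
      ≤ ‖x₁‖ * ‖y₁‖ - 1 / 2 * ((‖x₁‖ - ‖x₁ + α • x₂‖) * (‖y₁‖ - ‖y₁ + β • y₂‖)) := by
        rw [tensor_eq]
        exact injectiveNorm_tmul_sub_half_smul_tmul_le hα.le hβ.le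
    _ < ‖x₁‖ * ‖y₁‖ := by linarith

end InjectiveNorm

theorem stmt6_general
    {X Y : Type*} [SeminormedAddCommGroup X] [NormedSpace ℝ X]
    [SeminormedAddCommGroup Y] [NormedSpace ℝ Y]
    (x₁ x₂ : X) (y₁ y₂ : Y) :
    (∀ μ : ℝ,
        sSup { t : ℝ | ∃ (φ : X →L[ℝ] ℝ) (ψ : Y →L[ℝ] ℝ), ‖φ‖ ≤ 1 ∧ ‖ψ‖ ≤ 1 ∧
            t = |φ x₁ * ψ y₁ + μ * (φ x₂ * ψ y₂)| } ≥ ‖x₁‖ * ‖y₁‖) ↔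
      (∀ α : ℝ, ‖x₁ + α • x₂‖ ≥ ‖x₁‖) ∨ (∀ α : ℝ, ‖y₁ + α • y₂‖ ≥ ‖y₁‖) := by
  simp only [← injectiveNorm_tmul_add_smul_tmul]
  change _ ↔ BirkhoffJamesOrthogonal x₁ x₂ ∨ BirkhoffJamesOrthogonal y₁ y₂
  constructor
  · contrapose!
    rintro ⟨hx, hy⟩
    exact exists_injectiveNorm_lt_norm_mul_norm hx hy
  · rintro (hx | hy) μ
    · exact hx.norm_mul_norm_le_injectiveNorm_left y₁ y₂ μ
    · exact hy.norm_mul_norm_le_injectiveNorm_right x₁ x₂ μ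

/-- For real Banach spaces `X, Y` and `x₁, x₂ ∈ X`, `y₁, y₂ ∈ Y`, the
injective tensor norm of `(x₁ ⊗ y₁) + μ (x₂ ⊗ y₂)`, i.e.
`S(μ) = sup {|φ(x₁)ψ(y₁) + μ φ(x₂)ψ(y₂)| : ‖φ‖ ≤ 1, ‖ψ‖ ≤ 1}`, satisfies
`S(μ) ≥ ‖x₁‖·‖y₁‖` for all `μ ∈ ℝ` if and only if `x₁ ⊥_BJ x₂` or `y₁ ⊥_BJ y₂`. -/
theorem stmt6
    {X Y : Type*} [NormedAddCommGroup X] [NormedSpace ℝ X] [CompleteSpace X]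
    [NormedAddCommGroup Y] [NormedSpace ℝ Y] [CompleteSpace Y]
    (x₁ x₂ : X) (y₁ y₂ : Y) :
    (∀ μ : ℝ,
        sSup { t : ℝ | ∃ (φ : X →L[ℝ] ℝ) (ψ : Y →L[ℝ] ℝ), ‖φ‖ ≤ 1 ∧ ‖ψ‖ ≤ 1 ∧
            t = |φ x₁ * ψ y₁ + μ * (φ x₂ * ψ y₂)| } ≥ ‖x₁‖ * ‖y₁‖) ↔
      (∀ α : ℝ, ‖x₁ + α • x₂‖ ≥ ‖x₁‖) ∨ (∀ α : ℝ, ‖y₁ + α • y₂‖ ≥ ‖y₁‖) :=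
  stmt6_general x₁ x₂ y₁ y₂
end
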